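/- Lattice Chern–Simons form for the second Chern class: Let A be a lattice 1-form on ℤ^D and F = dA its curvature 2-form. Then, with the noncommutative wedge product, F ∧ F = d(A ∧ F). -/

import Mathlib

open scoped BigOperators

/-- A site of the hypercubic lattice `ℤ^D`. -/
abbrev Site (D : ℕ) := Fin D → ℤ

/-- The coefficient function of a lattice form on `ℤ^D`: to each site it assigns a
real coefficient depending on a sequence of direction indices (a `k`-form only
uses the first `k` indices). -/
abbrev Coeff (D : ℕ) := Site D → (ℕ → Fin D) → ℝ

/-- Shift a site by the `μ`-th standard basis vector `ê_μ`. -/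
def shiftSite {D : ℕ} (n : Site D) (μ : Fin D) : Site D :=
  fun ν => n ν + if ν = μ then 1 else 0

/-- Forward difference operator `(Δ_μ f)(n) = f(n + ê_μ) - f(n)`. -/
def fdiff {D : ℕ} (μ : Fin D) (f : Site D → ℝ) (n : Site D) : ℝ :=
  f (shiftSite n μ) - f n

/-- Shift a site by `ê_{μ 0} + ê_{μ 1} + ⋯ + ê_{μ (k-1)}`. -/
def multiShift {D : ℕ} (k : ℕ) (n : Site D) (μ : ℕ → Fin D) : Site D :=
  fun ν => n ν + ∑ i ∈ Finset.range k, (if ν = μ i then 1 else 0)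

/-- Antisymmetrization of a coefficient function over its first `k` indices. -/
noncomputable def alt {D : ℕ} (k : ℕ) (c : Coeff D) : Coeff D :=
  fun n μ => ((k.factorial : ℝ))⁻¹ *
    ∑ σ : Equiv.Perm (Fin k), ((Equiv.Perm.sign σ : ℤ) : ℝ) *
      c n (fun i => if h : i < k then μ ↑(σ ⟨i, h⟩) else μ i)

/-- The lattice exterior derivative of a `k`-form: the antisymmetrization over all
`k+1` indices of `Δ_μ ω_{μ₁⋯μ_k}(n)`. -/
noncomputable def extd {D : ℕ} (k : ℕ) (ω : Coeff D) : Coeff D :=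
  alt (k+1) (fun n μ => fdiff (μ 0) (fun x => ω x (fun i => μ (i+1))) n)

/-- The noncommutative wedge product of a `k`-form and an `l`-form on the lattice:
the antisymmetrization over all `k+l` indices of
`ω_{μ₁⋯μ_k}(n) · θ_{ν₁⋯ν_l}(n + ê_{μ₁} + ⋯ + ê_{μ_k})`. -/
noncomputable def wedge {D : ℕ} (k l : ℕ) (ω θ : Coeff D) : Coeff D :=
  alt (k+l) (fun n μ => ω n μ * θ (multiShift k n μ) (fun i => μ (i+k)))

/-- Iterated noncommutative wedge power of a 2-form (the empty product is the
constant `1`, a 0-form). -/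
noncomputable def wpow {D : ℕ} (F : Coeff D) : ℕ → Coeff D
  | 0 => fun _ _ => 1
  | m+1 => wedge 2 (2*m) F (wpow F m)

/-- Noncommutative wedge product of a list of (degree, form) pairs. -/
noncomputable def wedgeList {D : ℕ} : List (ℕ × Coeff D) → Coeff D
  | [] => fun _ _ => 1
  | (d, ω) :: rest => wedge d ((rest.map Prod.fst).sum) ω (wedgeList rest)

/-- `ω` is a genuine lattice `k`-form: its coefficient depends only on the first
`k` indices and is totally antisymmetric in them. -/
def IsLatticeForm (D k : ℕ) (ω : Coeff D) : Prop :=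
  (∀ (n : Site D) (μ ν : ℕ → Fin D), (∀ i < k, μ i = ν i) → ω n μ = ω n ν) ∧
  (∀ (n : Site D) (μ : ℕ → Fin D) (σ : Equiv.Perm (Fin k)),
    ω n (fun i => if h : i < k then μ ↑(σ ⟨i, h⟩) else μ i)
      = ((Equiv.Perm.sign σ : ℤ) : ℝ) * ω n μ)

/-- Extend a tuple `m : Fin j → ℕ` to `ℕ → ℕ` by zero. -/
def mext {j : ℕ} (m : Fin j → ℕ) : ℕ → ℕ :=
  fun i => if h : i < j then m ⟨i, h⟩ else 0

/-- The curvature 2-form `F = dA` of a lattice 1-form `A`. -/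
noncomputable def curv {D : ℕ} (A : Coeff D) : Coeff D := extd 1 A

/-- The standard descent product
`F_0^{m_0} ∧ η^{1,0} ∧ F_1^{m_1} ∧ η^{2,1} ∧ ⋯ ∧ η^{k,k-1} ∧ F_k^{m_k}`,
with `F_i = dA_i` and `η^{i,i-1} = A_i - A_{i-1}`, as a list of (degree, form) pairs. -/
noncomputable def descentList {D : ℕ} (k : ℕ) (A : ℕ → Coeff D) (m : ℕ → ℕ) : List (ℕ × Coeff D) :=
  (2 * m 0, wpow (curv (A 0)) (m 0)) ::
    (List.range k).flatMap (fun i =>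
      [(1, A (i+1) - A i), (2 * m (i+1), wpow (curv (A (i+1))) (m (i+1)))])

/-- The Chern–Simons type characteristic class `Q_r^{(k)}(A_0,…,A_k)` on the lattice:
the sum over compositions `m_0 + ⋯ + m_k = r - k` of the descent products. -/
noncomputable def Qpoly {D : ℕ} (r k : ℕ) (A : ℕ → Coeff D) : Coeff D :=
  ∑ m ∈ Finset.Nat.antidiagonalTuple (k+1) (r - k), wedgeList (descentList k A (mext m))

/-!
Antisymmetrizing over a set of indices absorbs any earlier antisymmetrization over a subset of
them, so in every composite of `extd` and `wedge` only the outermost antisymmetrization matters and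
one may compute with the plain coefficient tensors `Δ_μ ω` and `ω(n) θ(n + ê_{μ₁} + ⋯ + ê_{μ_k})`.
The shift in the second factor makes the lattice Leibniz rule exact: telescoping through
`ω(n) θ(n + ê_{μ₀} + ⋯)` gives `d(ω ∧ θ) = dω ∧ θ + (-1)^k ω ∧ dθ`, the sign being that of the
rotation which moves the derivative index past the `k` indices of `ω`. As `d ∘ d = 0`, the Leibniz
rule for `ω ∧ dθ` reduces to `d(ω ∧ dθ) = dω ∧ dθ`.
-/

open Equiv

theorem viaEmbedding_viaEmbedding {α β γ : Type*} (σ : Perm α) (e : α ↪ β) (f : β ↪ γ) :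
    (σ.viaEmbedding e).viaEmbedding f = σ.viaEmbedding (e.trans f) := by
  ext x
  by_cases hx : x ∈ Set.range f
  · obtain ⟨y, rfl⟩ := hx
    rw [Perm.viaEmbedding_apply]
    by_cases hy : y ∈ Set.range e
    · obtain ⟨z, rfl⟩ := hy
      rw [Perm.viaEmbedding_apply]
      exact (Perm.viaEmbedding_apply σ (e.trans f) z).symm
    · rw [Perm.viaEmbedding_apply_of_notMem _ _ _ hy, Perm.viaEmbedding_apply_of_notMem]
      rintro ⟨z, hz⟩
      exact hy ⟨z, f.injective hz⟩
  · rw [Perm.viaEmbedding_apply_of_notMem _ _ _ hx, Perm.viaEmbedding_apply_of_notMem]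
    rintro ⟨z, rfl⟩
    exact hx ⟨e z, rfl⟩

theorem viaEmbedding_swap {α β : Type*} [DecidableEq α] [DecidableEq β] (a b : α) (e : α ↪ β) :
    (swap a b).viaEmbedding e = swap (e a) (e b) := by
  ext x
  by_cases hx : x ∈ Set.range e
  · obtain ⟨y, rfl⟩ := hx
    rw [Perm.viaEmbedding_apply, Function.Embedding.swap_apply]
  · rw [Perm.viaEmbedding_apply_of_notMem _ _ _ hx, swap_apply_of_ne_of_ne]
    · rintro rfl
      exact hx ⟨a, rfl⟩
    · rintro rfl
      exact hx ⟨b, rfl⟩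

theorem sign_viaEmbedding {α β : Type*} [Fintype α] [DecidableEq α] [Fintype β] [DecidableEq β]
    (σ : Perm α) (e : α ↪ β) : Perm.sign (σ.viaEmbedding e) = Perm.sign σ := by
  classical
  rw [Perm.viaEmbedding]
  convert Perm.sign_extendDomain σ (Equiv.ofInjective e.1 e.2)

theorem castAddEmb_trans_valEmbedding (k l : ℕ) :
    (Fin.castAddEmb l).trans Fin.valEmbedding = Fin.valEmbedding (n := k) := rfl

section FinPerm

variable {k : ℕ} (σ : Perm (Fin k))

theorem viaEmbedding_valEmbedding_of_lt {i : ℕ} (hi : i < k) :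
    σ.viaEmbedding Fin.valEmbedding i = σ ⟨i, hi⟩ :=
  Perm.viaEmbedding_apply σ Fin.valEmbedding ⟨i, hi⟩

theorem viaEmbedding_valEmbedding_of_le {i : ℕ} (hi : k ≤ i) :
    σ.viaEmbedding Fin.valEmbedding i = i :=
  Perm.viaEmbedding_apply_of_notMem _ _ _ fun ⟨j, hj⟩ => hi.not_gt (hj.symm.trans_lt j.isLt)

variable {l : ℕ} (τ : Perm (Fin l))

theorem viaEmbedding_natAdd_of_lt {i : ℕ} (hi : i < k) :
    τ.viaEmbedding ((Fin.natAddEmb k).trans Fin.valEmbedding) i = i :=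
  Perm.viaEmbedding_apply_of_notMem _ _ _ fun ⟨_, hj⟩ =>
    (Nat.le_add_right k _).not_gt (hj.trans_lt hi)

theorem viaEmbedding_natAdd_apply_add (i : ℕ) :
    τ.viaEmbedding ((Fin.natAddEmb k).trans Fin.valEmbedding) (i + k) =
      τ.viaEmbedding Fin.valEmbedding i + k := by
  rcases lt_or_ge i l with hi | hi
  · rw [viaEmbedding_valEmbedding_of_lt τ hi, add_comm i, add_comm _ k]
    exact Perm.viaEmbedding_apply τ ((Fin.natAddEmb k).trans Fin.valEmbedding) ⟨i, hi⟩
  · rw [viaEmbedding_valEmbedding_of_le τ hi, Perm.viaEmbedding_apply_of_notMem]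
    rintro ⟨j, hj⟩
    have : k + (j : ℕ) = i + k := hj
    omega

end FinPerm

section Antisymmetrization

variable {D : ℕ}

/-- The action of permutations of the index slots on coefficient functions. -/
def reindex : Perm ℕ →* Module.End ℝ (Coeff D) where
  toFun π :=
    { toFun := fun c n μ => c n (μ ∘ π)
      map_add' := fun _ _ => rfl
      map_smul' := fun _ _ => rfl }
  map_one' := rfl
  map_mul' _ _ := rfl

theorem reindex_apply (π : Perm ℕ) (c : Coeff D) (n : Site D) (μ : ℕ → Fin D) :
    reindex π c n μ = c n (μ ∘ π) := rfl

variable {ι κ : Type*} [Fintype ι] [DecidableEq ι] [Fintype κ] [DecidableEq κ]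

/-- Antisymmetrization over the index slots in the range of `e`. Allowing slots other than the first
`k` expresses the antisymmetry of a factor that sits inside a larger tensor. -/
noncomputable def altAlong (e : ι ↪ ℕ) : Module.End ℝ (Coeff D) :=
  ((Fintype.card ι).factorial : ℝ)⁻¹ •
    ∑ σ : Perm ι, Perm.sign σ • reindex (σ.viaEmbedding e)

theorem altAlong_apply (e : ι ↪ ℕ) (c : Coeff D) :
    altAlong e c = ((Fintype.card ι).factorial : ℝ)⁻¹ •
      ∑ σ : Perm ι, Perm.sign σ • reindex (σ.viaEmbedding e) c := by
  simp [altAlong, LinearMap.sum_apply]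

theorem alt_eq_altAlong (k : ℕ) (c : Coeff D) :
    alt k c = altAlong (Fin.valEmbedding (n := k)) c := by
  ext n μ
  have hσ (σ : Perm (Fin k)) : (fun i => if h : i < k then μ (σ ⟨i, h⟩) else μ i) =
      μ ∘ σ.viaEmbedding Fin.valEmbedding := by
    ext i
    split_ifs with hi
    · rw [Function.comp_apply, viaEmbedding_valEmbedding_of_lt σ hi]
    · rw [Function.comp_apply, viaEmbedding_valEmbedding_of_le σ (not_lt.mp hi)]
  simp only [alt, altAlong_apply, hσ, Pi.smul_apply, Finset.sum_apply, reindex_apply,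
    Fintype.card_fin, Units.smul_def, smul_eq_mul]
  simp only [zsmul_eq_mul]

theorem alt_add (k : ℕ) (c c' : Coeff D) : alt k (c + c') = alt k c + alt k c' := by
  simp only [alt_eq_altAlong, map_add]

theorem altAlong_reindex (e : ι ↪ ℕ) (τ : Perm ι) (c : Coeff D) :
    altAlong e (reindex (τ.viaEmbedding e) c) = Perm.sign τ • altAlong e c := by
  have hterm (σ : Perm ι) :
      Perm.sign σ • reindex (σ.viaEmbedding e) (reindex (τ.viaEmbedding e) c) =
        Perm.sign τ • Perm.sign (σ * τ) • reindex ((σ * τ).viaEmbedding e) c := by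
    rw [Perm.sign_mul, smul_smul, mul_left_comm, Int.units_mul_self, mul_one]
    simp only [← Perm.viaEmbeddingHom_apply, map_mul, Module.End.mul_apply]
  rw [altAlong_apply, altAlong_apply, smul_comm (Perm.sign τ),
    Finset.smul_sum (r := Perm.sign τ), Finset.sum_congr rfl fun σ _ => hterm σ]
  congr 1
  exact Equiv.sum_comp (Equiv.mulRight τ)
    fun σ => Perm.sign τ • Perm.sign σ • reindex (σ.viaEmbedding e) c

theorem altAlong_reindex_trans (e : ι ↪ κ) (f : κ ↪ ℕ) (σ : Perm ι) (c : Coeff D) :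
    altAlong f (reindex (σ.viaEmbedding (e.trans f)) c) = Perm.sign σ • altAlong f c := by
  rw [← viaEmbedding_viaEmbedding, altAlong_reindex, sign_viaEmbedding]

theorem altAlong_altAlong (e : ι ↪ κ) (f : κ ↪ ℕ) (c : Coeff D) :
    altAlong f (altAlong (e.trans f) c) = altAlong f c := by
  have hcard : ((Fintype.card ι).factorial : ℝ) ≠ 0 := by positivity
  simp only [altAlong_apply (e.trans f), map_smul, map_sum, LinearMap.map_smul_of_tower,
    altAlong_reindex_trans, smul_smul, Int.units_mul_self, one_smul, Finset.sum_const,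
    Finset.card_univ, Fintype.card_perm]
  rw [← Nat.cast_smul_eq_nsmul ℝ, smul_smul, inv_mul_cancel₀ hcard, one_smul]

theorem altAlong_eq_zero {e : ι ↪ ℕ} {τ : Perm ι} {c : Coeff D} (hτ : Perm.sign τ = -1)
    (hc : reindex (τ.viaEmbedding e) c = c) : altAlong e c = 0 := by
  have h := altAlong_reindex e τ c
  rw [hc, hτ, Units.neg_smul, one_smul] at h
  exact self_eq_neg.mp h

theorem map_altAlong {e f : ι ↪ ℕ} {T : Module.End ℝ (Coeff D)}
    (hT : ∀ (σ : Perm ι) (c : Coeff D),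
      T (reindex (σ.viaEmbedding e) c) = reindex (σ.viaEmbedding f) (T c)) (c : Coeff D) :
    T (altAlong e c) = altAlong f (T c) := by
  simp only [altAlong_apply, map_smul, map_sum, LinearMap.map_smul_of_tower, hT]

end Antisymmetrization

section Shift

variable {D : ℕ}

theorem shiftSite_comm (n : Site D) (a b : Fin D) :
    shiftSite (shiftSite n a) b = shiftSite (shiftSite n b) a := by
  ext ν
  exact add_right_comm _ _ _

theorem multiShift_succ (k : ℕ) (n : Site D) (μ : ℕ → Fin D) :
    multiShift (k + 1) n μ = shiftSite (multiShift k n μ) (μ k) := by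
  ext ν
  simp only [multiShift, shiftSite, Finset.sum_range_succ, add_assoc]

theorem multiShift_succ' (k : ℕ) (n : Site D) (μ : ℕ → Fin D) :
    multiShift (k + 1) n μ = multiShift k (shiftSite n (μ 0)) (fun i => μ (i + 1)) := by
  ext ν
  simp only [multiShift, shiftSite, Finset.sum_range_succ', add_assoc, add_comm]

theorem dependsOn_multiShift (k : ℕ) (n : Site D) : DependsOn (multiShift k n) (Set.Iio k) := by
  intro μ ν h
  ext a
  simp only [multiShift]
  congr 1
  exact Finset.sum_congr rfl fun i hi => by rw [h i (Finset.mem_range.mp hi)]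

theorem multiShift_comp_viaEmbedding {k : ℕ} (σ : Perm (Fin k)) (n : Site D) (μ : ℕ → Fin D) :
    multiShift k n (μ ∘ σ.viaEmbedding Fin.valEmbedding) = multiShift k n μ := by
  ext ν
  simp only [multiShift, Function.comp_apply, Finset.sum_range,
    viaEmbedding_valEmbedding_of_lt σ (Fin.isLt _)]
  rw [Equiv.sum_comp σ fun i : Fin k => if ν = μ i then (1 : ℤ) else 0]

end Shift

section Tensor

variable {D : ℕ}

/-- The coefficients `Δ_{μ₀} ω_{μ₁⋯}(n)` of `dω` before antisymmetrization. -/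
def diffTensor : Module.End ℝ (Coeff D) where
  toFun ω n μ := fdiff (μ 0) (fun x => ω x (fun i => μ (i + 1))) n
  map_add' _ _ := by ext; simp only [fdiff, Pi.add_apply]; ring
  map_smul' _ _ := by ext; simp only [fdiff, Pi.smul_apply, smul_eq_mul, RingHom.id_apply]; ring

/-- The coefficients `ω_{μ₁⋯μ_k}(n) · θ_{ν₁⋯}(n + ê_{μ₁} + ⋯ + ê_{μ_k})` of `ω ∧ θ` before
antisymmetrization, as a bilinear map in `ω` and `θ`. -/
def shiftTensor (k : ℕ) : Coeff D →ₗ[ℝ] Coeff D →ₗ[ℝ] Coeff D :=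
  LinearMap.mk₂ ℝ (fun ω θ n μ => ω n μ * θ (multiShift k n μ) (fun i => μ (i + k)))
    (fun _ _ _ => by ext; simp only [Pi.add_apply]; ring)
    (fun _ _ _ => by ext; simp only [Pi.smul_apply, smul_eq_mul]; ring)
    (fun _ _ _ => by ext; simp only [Pi.add_apply]; ring)
    (fun _ _ _ => by ext; simp only [Pi.smul_apply, smul_eq_mul]; ring)

theorem extd_eq_alt_diffTensor (k : ℕ) (ω : Coeff D) : extd k ω = alt (k + 1) (diffTensor ω) := rfl

theorem wedge_eq_alt_shiftTensor (k l : ℕ) (ω θ : Coeff D) :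
    wedge k l ω θ = alt (k + l) (shiftTensor k ω θ) := rfl

theorem diffTensor_apply (ω : Coeff D) (n : Site D) (μ : ℕ → Fin D) :
    diffTensor ω n μ = ω (shiftSite n (μ 0)) (fun i => μ (i + 1)) - ω n (fun i => μ (i + 1)) := rfl

theorem shiftTensor_apply (k : ℕ) (ω θ : Coeff D) (n : Site D) (μ : ℕ → Fin D) :
    shiftTensor k ω θ n μ = ω n μ * θ (multiShift k n μ) (fun i => μ (i + k)) := rfl

theorem diffTensor_reindex {k : ℕ} (σ : Perm (Fin k)) (ω : Coeff D) :
    diffTensor (reindex (σ.viaEmbedding Fin.valEmbedding) ω) =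
      reindex (σ.viaEmbedding ((Fin.natAddEmb 1).trans Fin.valEmbedding)) (diffTensor ω) := by
  ext n μ
  simp only [diffTensor_apply, reindex_apply, Function.comp_def, viaEmbedding_natAdd_apply_add,
    viaEmbedding_natAdd_of_lt σ zero_lt_one]

theorem shiftTensor_reindex_left {k : ℕ} (σ : Perm (Fin k)) (ω θ : Coeff D) :
    shiftTensor k (reindex (σ.viaEmbedding Fin.valEmbedding) ω) θ =
      reindex (σ.viaEmbedding Fin.valEmbedding) (shiftTensor k ω θ) := by
  ext n μ
  simp only [shiftTensor_apply, reindex_apply, multiShift_comp_viaEmbedding, Function.comp_apply,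
    viaEmbedding_valEmbedding_of_le σ (Nat.le_add_left k _)]

theorem shiftTensor_reindex_right {k l : ℕ} {ω : Coeff D} (hω : ∀ n, DependsOn (ω n) (Set.Iio k))
    (σ : Perm (Fin l)) (θ : Coeff D) :
    shiftTensor k ω (reindex (σ.viaEmbedding Fin.valEmbedding) θ) =
      reindex (σ.viaEmbedding ((Fin.natAddEmb k).trans Fin.valEmbedding))
        (shiftTensor k ω θ) := by
  ext n μ
  have hμ (i : ℕ) (hi : i ∈ Set.Iio k) :
      (μ ∘ σ.viaEmbedding ((Fin.natAddEmb k).trans Fin.valEmbedding)) i = μ i :=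
    congrArg μ (viaEmbedding_natAdd_of_lt σ hi)
  rw [reindex_apply, shiftTensor_apply, shiftTensor_apply, hω n hμ, dependsOn_multiShift k n hμ]
  simp only [reindex_apply, Function.comp_def, viaEmbedding_natAdd_apply_add]

theorem reindex_swap_diffTensor_diffTensor (ω : Coeff D) :
    reindex (swap 0 1) (diffTensor (diffTensor ω)) = diffTensor (diffTensor ω) := by
  ext n μ
  have htail (i : ℕ) : swap 0 1 (i + 1 + 1) = i + 1 + 1 :=
    swap_apply_of_ne_of_ne (by omega) (by omega)
  simp only [reindex_apply, diffTensor_apply, Function.comp_apply, htail, zero_add,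
    swap_apply_left, swap_apply_right, shiftSite_comm n (μ 1) (μ 0)]
  ring

theorem diffTensor_shiftTensor {k : ℕ} {ω : Coeff D} (hω : ∀ n, DependsOn (ω n) (Set.Iio k))
    (θ : Coeff D) :
    diffTensor (shiftTensor k ω θ) = shiftTensor (k + 1) (diffTensor ω) θ +
      reindex ((finRotate (k + 1)).viaEmbedding Fin.valEmbedding)
        (shiftTensor k ω (diffTensor θ)) := by
  ext n μ
  set π := (finRotate (k + 1)).viaEmbedding Fin.valEmbedding
  have hlt (i : ℕ) (hi : i ∈ Set.Iio k) : (μ ∘ π) i = μ (i + 1) := by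
    have h := viaEmbedding_valEmbedding_of_lt (finRotate (k + 1)) (Nat.lt_succ_of_lt hi)
    rw [finRotate_of_lt hi] at h
    exact congrArg μ h
  have htail (i : ℕ) : (μ ∘ π) (i + 1 + k) = μ (i + k + 1) := by
    rw [add_right_comm]
    exact congrArg μ (viaEmbedding_valEmbedding_of_le _ (by omega))
  have hmulti : multiShift k n (μ ∘ π) = multiShift k n (fun i => μ (i + 1)) :=
    dependsOn_multiShift k n hlt
  have hshift : shiftSite (multiShift k n (fun i => μ (i + 1))) ((μ ∘ π) k) =
      multiShift (k + 1) n μ := by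
    rw [← hmulti, ← multiShift_succ, multiShift_comp_viaEmbedding]
  simp only [Pi.add_apply, reindex_apply, shiftTensor_apply, diffTensor_apply, zero_add, hshift,
    htail, hω n hlt, ← multiShift_succ', hmulti, ← add_assoc]
  ring

end Tensor

section Forms

variable {D : ℕ}

theorem extd_alt (k : ℕ) (c : Coeff D) : extd k (alt k c) = alt (k + 1) (diffTensor c) := by
  rw [extd_eq_alt_diffTensor, alt_eq_altAlong k, map_altAlong diffTensor_reindex, add_comm k 1,
    alt_eq_altAlong, altAlong_altAlong, ← alt_eq_altAlong]

theorem wedge_alt_left (k l : ℕ) (ω θ : Coeff D) : wedge k l (alt k ω) θ = wedge k l ω θ := by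
  have hleft : shiftTensor k (altAlong (Fin.valEmbedding (n := k)) ω) θ =
      altAlong Fin.valEmbedding (shiftTensor k ω θ) :=
    map_altAlong (T := (shiftTensor k).flip θ) (fun σ c => shiftTensor_reindex_left σ c θ) ω
  rw [wedge_eq_alt_shiftTensor, alt_eq_altAlong k, hleft, alt_eq_altAlong (k + l),
    ← castAddEmb_trans_valEmbedding k l, altAlong_altAlong, ← alt_eq_altAlong,
    wedge_eq_alt_shiftTensor]

theorem wedge_alt_right {k : ℕ} (l : ℕ) {ω : Coeff D} (hω : ∀ n, DependsOn (ω n) (Set.Iio k))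
    (θ : Coeff D) : wedge k l ω (alt l θ) = wedge k l ω θ := by
  rw [wedge_eq_alt_shiftTensor, alt_eq_altAlong l, map_altAlong (shiftTensor_reindex_right hω),
    alt_eq_altAlong (k + l), altAlong_altAlong, ← alt_eq_altAlong, wedge_eq_alt_shiftTensor]

theorem extd_extd (k : ℕ) (ω : Coeff D) : extd (k + 1) (extd k ω) = 0 := by
  rw [extd_eq_alt_diffTensor k, extd_alt, alt_eq_altAlong]
  refine altAlong_eq_zero (Perm.sign_swap (zero_ne_one' (Fin (k + 2)))) ?_
  rw [viaEmbedding_swap]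
  exact reindex_swap_diffTensor_diffTensor ω

theorem alt_reindex_finRotate (k l : ℕ) (c : Coeff D) :
    alt (k + 1 + l) (reindex ((finRotate (k + 1)).viaEmbedding Fin.valEmbedding) c) =
      (-1 : ℤˣ) ^ k • alt (k + 1 + l) c := by
  rw [alt_eq_altAlong, alt_eq_altAlong, ← castAddEmb_trans_valEmbedding (k + 1) l,
    altAlong_reindex_trans, sign_finRotate, Nat.add_sub_cancel]

theorem extd_wedge {k : ℕ} (l : ℕ) {ω : Coeff D} (hω : ∀ n, DependsOn (ω n) (Set.Iio k))
    (θ : Coeff D) :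
    extd (k + l) (wedge k l ω θ) =
      wedge (k + 1) l (extd k ω) θ + (-1 : ℤˣ) ^ k • wedge k (l + 1) ω (extd l θ) := by
  rw [extd_eq_alt_diffTensor k, extd_eq_alt_diffTensor l, wedge_alt_left, wedge_alt_right _ hω]
  rw [wedge_eq_alt_shiftTensor, extd_alt, diffTensor_shiftTensor hω, add_right_comm k l 1, alt_add,
    alt_reindex_finRotate, wedge_eq_alt_shiftTensor, wedge_eq_alt_shiftTensor,
    add_right_comm k 1 l, add_assoc k l 1]

theorem wedge_zero_right (k l : ℕ) (ω : Coeff D) : wedge k l ω 0 = 0 := by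
  rw [wedge_eq_alt_shiftTensor, map_zero, alt_eq_altAlong, map_zero]

end Forms

theorem lattice_chern_simons_general {D k : ℕ} (l : ℕ) {ω : Coeff D}
    (hω : ∀ n, DependsOn (ω n) (Set.Iio k)) (θ : Coeff D) :
    wedge (k + 1) (l + 1) (extd k ω) (extd l θ) =
      extd (k + (l + 1)) (wedge k (l + 1) ω (extd l θ)) := by
  rw [extd_wedge _ hω, extd_extd, wedge_zero_right, smul_zero, add_zero]

/-- **Lattice Chern–Simons form for the second Chern class.** For a lattice
1-form `A` on `ℤ^D` with curvature `F = dA`, with the noncommutative wedge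
product, `F ∧ F = d(A ∧ F)`. -/
theorem lattice_chern_simons (D : ℕ) (A : Coeff D) (hA : IsLatticeForm D 1 A) :
    wedge 2 2 (curv A) (curv A) = extd 3 (wedge 1 2 A (curv A)) :=
  lattice_chern_simons_general 1 hA.1 A
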